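/- Every nonempty family of finite-variation signed charges on a semi-ring 𝒮 that is bounded above by a finite-variation signed charge has a least upper bound (in the pointwise order) which is itself a finite-variation signed charge on 𝒮. (Dedekind completeness of the Riesz space fa(𝒮).) -/

import Mathlib

/-!
Put `f C = sup_{μ ∈ G} μ C` and let `σ A` be the supremum of `∑ C ∈ P, f C` over all finite
partitions `P` of `A` by elements of `S`. If a charge `τ` dominates every `μ ∈ G` on `S`, then
`f ≤ τ` on `S`, so each of these sums is at most `τ A`; with `τ = β` the suprema are finite, and
in general `σ ≤ τ`. Conversely `μ ≤ f ≤ σ`.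

The set function `f` is subadditive along partitions (`envelope_le_sum`), hence replacing a
partition `P` of `A = ⋃ i, A i` by the traces `C ∩ A i` only increases the sum; together with the
fact that partitions of the pieces `A i` glue to a partition of `A`, this makes `σ` additive
(`isRealCharge_partSup`). The variation of `σ` is finite because `μ₀ ≤ σ ≤ β` for any `μ₀ ∈ G`
gives `|σ C| ≤ |μ₀ C| + |β C|` for every `C ∈ S`. Of the semi-ring axioms only `∅ ∈ S` and
stability under intersections enter.
-/

open MeasureTheory Set
open scoped ENNReal NNReal BigOperators

namespace SignedCharges

variable {Ω : Type*}

/-- `P` is a finite partition of `A` by elements of the family `S`. -/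
def IsPartition (S : Set (Set Ω)) (A : Set Ω) (P : Finset (Set Ω)) : Prop :=
  ↑P ⊆ S ∧ (P : Set (Set Ω)).PairwiseDisjoint id ∧ ⋃₀ ↑P = A

/-- The partition-supremum `μ_F` of a family `F = (ν j)` of `EReal`-valued set functions:
`μ_F(A) = sup` over finite partitions `Π` of `A` by elements of `S` of `Σ_{C ∈ Π} sup_j ν j C`. -/
noncomputable def supFun {J : Type*} (S : Set (Set Ω)) (ν : J → Set Ω → EReal)
    (A : Set Ω) : EReal :=
  ⨆ P : Finset (Set Ω), ⨆ _ : IsPartition S A P, ∑ C ∈ P, ⨆ j, ν j C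

/-- The admissibility hypothesis: `sup_j ν j A > -∞` for every `A ∈ S`. -/
def Admissible {J : Type*} (S : Set (Set Ω)) (ν : J → Set Ω → EReal) : Prop :=
  ∀ A ∈ S, ⊥ < ⨆ j, ν j A

/-- An `EReal`-valued signed charge on `S`: vanishes on `∅`, finitely additive on finite
disjoint unions within `S`, and omits at least one of the values `+∞`, `-∞` on `S`. -/
structure IsCharge (S : Set (Set Ω)) (μ : Set Ω → EReal) : Prop where
  empty : μ ∅ = 0
  additive : ∀ (n : ℕ) (A : Fin n → Set Ω), (∀ i, A i ∈ S) →
    Pairwise (Function.onFun Disjoint A) → (⋃ i, A i) ∈ S → μ (⋃ i, A i) = ∑ i, μ (A i)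
  omits : (∀ A ∈ S, μ A ≠ ⊤) ∨ (∀ A ∈ S, μ A ≠ ⊥)

/-- A finite (real-valued) signed charge on `S`. -/
structure IsRealCharge (S : Set (Set Ω)) (μ : Set Ω → ℝ) : Prop where
  empty : μ ∅ = 0
  additive : ∀ (n : ℕ) (A : Fin n → Set Ω), (∀ i, A i ∈ S) →
    Pairwise (Function.onFun Disjoint A) → (⋃ i, A i) ∈ S → μ (⋃ i, A i) = ∑ i, μ (A i)

/-- Countable additivity for a real-valued set function (unconditional convergence). -/
def CountablyAdditiveR (S : Set (Set Ω)) (μ : Set Ω → ℝ) : Prop :=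
  ∀ A : ℕ → Set Ω, (∀ n, A n ∈ S) → Pairwise (Function.onFun Disjoint A) →
    (⋃ n, A n) ∈ S → HasSum (fun n => μ (A n)) (μ (⋃ n, A n))

/-- Countable sub-additivity for an `EReal`-valued set function. -/
def CountablySubadditiveE (S : Set (Set Ω)) (μ : Set Ω → EReal) : Prop :=
  ∀ A : ℕ → Set Ω, (∀ n, A n ∈ S) → Pairwise (Function.onFun Disjoint A) →
    (⋃ n, A n) ∈ S → μ (⋃ n, A n) ≤ ∑' n, μ (A n)

/-- Countable additivity for an `EReal`-valued set function. -/
def CountablyAdditiveE (S : Set (Set Ω)) (μ : Set Ω → EReal) : Prop :=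
  ∀ A : ℕ → Set Ω, (∀ n, A n ∈ S) → Pairwise (Function.onFun Disjoint A) →
    (⋃ n, A n) ∈ S → μ (⋃ n, A n) = ∑' n, μ (A n)

/-- `μ⁺ = μ ∨ 0` : sup over finite partitions of `Σ_{C} max (μ C) 0`. -/
noncomputable def pos (S : Set (Set Ω)) (μ : Set Ω → EReal) (A : Set Ω) : EReal :=
  ⨆ P : Finset (Set Ω), ⨆ _ : IsPartition S A P, ∑ C ∈ P, max (μ C) 0

/-- `μ⁻ = (-μ) ∨ 0` : sup over finite partitions of `Σ_{C} max (-μ C) 0`. -/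
noncomputable def neg (S : Set (Set Ω)) (μ : Set Ω → EReal) (A : Set Ω) : EReal :=
  ⨆ P : Finset (Set Ω), ⨆ _ : IsPartition S A P, ∑ C ∈ P, max (-μ C) 0

/-- The variation `|μ|` : sup over finite partitions of `Σ_{C} |μ C|`. -/
noncomputable def var (S : Set (Set Ω)) (μ : Set Ω → EReal) (A : Set Ω) : EReal :=
  ⨆ P : Finset (Set Ω), ⨆ _ : IsPartition S A P, ∑ C ∈ P, max (μ C) (-μ C)

/-- The infimum `α ∧ β` of two nonnegative charges:
inf over finite partitions of `Σ_{C} min (α C) (β C)`. -/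
noncomputable def infC (S : Set (Set Ω)) (α β : Set Ω → EReal) (A : Set Ω) : EReal :=
  ⨅ P : Finset (Set Ω), ⨅ _ : IsPartition S A P, ∑ C ∈ P, min (α C) (β C)

/-- The ring generated by a semi-ring: finite unions of elements of `S`. -/
def genRing (S : Set (Set Ω)) : Set (Set Ω) :=
  {A | ∃ P : Finset (Set Ω), ↑P ⊆ S ∧ A = ⋃₀ ↑P}

/-- Coercion of a real-valued set function to an `EReal`-valued one. -/
def toE (μ : Set Ω → ℝ) : Set Ω → EReal := fun A => (μ A : EReal)

/-- `μ` has finite variation on `S`. -/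
def FiniteVar (S : Set (Set Ω)) (μ : Set Ω → ℝ) : Prop :=
  ∀ A ∈ S, var S (toE μ) A ≠ ⊤

/-! ### Envelopes, partitions and finite variation -/

/-- The pointwise supremum of the family `G`. Being a real supremum, it takes the junk value `0`
at sets where `G` is unbounded. -/
noncomputable def envelope (G : Set (Set Ω → ℝ)) (C : Set Ω) : ℝ :=
  sSup ((fun μ : Set Ω → ℝ => μ C) '' G)

/-- The partition supremum of a real set function `f`: the supremum of `∑ C ∈ P, f C` over the
finite partitions `P` of `A`. It takes the junk value `0` if these sums are unbounded. -/
noncomputable def partSup (S : Set (Set Ω)) (f : Set Ω → ℝ) (A : Set Ω) : ℝ :=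
  sSup {x | ∃ P : Finset (Set Ω), IsPartition S A P ∧ ∑ C ∈ P, f C = x}

lemma isPartition_singleton {S : Set (Set Ω)} {A : Set Ω} (hA : A ∈ S) :
    IsPartition S A {A} := by
  refine ⟨by simpa using hA, by simp, by simp⟩

/-- Indexed disjoint families may repeat `∅`, but this is harmless for `f ∅ = 0`: the range of
the family is a partition with the same sum. -/
lemma exists_isPartition_of_family {S : Set (Set Ω)} {f : Set Ω → ℝ} (hf : f ∅ = 0) {ι : Type*}
    (s : Finset ι) (B : ι → Set Ω) (hB : ∀ i ∈ s, B i ∈ S)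
    (hd : (s : Set ι).PairwiseDisjoint B) :
    ∃ P, IsPartition S (⋃ i ∈ s, B i) P ∧ ∑ C ∈ P, f C = ∑ i ∈ s, f (B i) := by
  classical
  refine ⟨s.image B, ⟨?_, ?_, ?_⟩, ?_⟩
  · intro C hC
    obtain ⟨i, hi, rfl⟩ := Finset.mem_image.1 (Finset.mem_coe.1 hC)
    exact hB i hi
  · intro C hC D hD hne
    obtain ⟨i, hi, rfl⟩ := Finset.mem_image.1 (Finset.mem_coe.1 hC)
    obtain ⟨j, hj, rfl⟩ := Finset.mem_image.1 (Finset.mem_coe.1 hD)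
    exact hd hi hj (fun h => hne (by rw [h]))
  · simp
  · exact Finset.sum_image_of_disjoint hf hd

lemma IsRealCharge.sum_partition {S : Set (Set Ω)} {μ : Set Ω → ℝ} (hμ : IsRealCharge S μ)
    {A : Set Ω} (hA : A ∈ S) {P : Finset (Set Ω)} (hP : IsPartition S A P) :
    μ A = ∑ C ∈ P, μ C := by
  obtain ⟨hPS, hPd, hPA⟩ := hP
  let e := P.equivFin
  have hU : (⋃ i, ((e.symm i : P) : Set Ω)) = A := by
    rw [← hPA, Set.sUnion_eq_iUnion]
    exact e.symm.surjective.iUnion_comp (fun C : P => (C : Set Ω))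
  have h := hμ.additive P.card (fun i => ((e.symm i : P) : Set Ω))
    (fun i => hPS (e.symm i).2)
    (fun i j hij => hPd (e.symm i).2 (e.symm j).2
      (fun h => hij (e.symm.injective (Subtype.ext h))))
    (by rw [hU]; exact hA)
  rw [hU] at h
  rw [h, e.symm.sum_comp (fun C : P => μ C), Finset.sum_coe_sort P μ]

/-- Finite variation in real terms: the sums `∑ |μ C|` over partitions of a given set are
bounded. -/
lemma finiteVar_iff {S : Set (Set Ω)} {μ : Set Ω → ℝ} :
    FiniteVar S μ ↔
      ∀ A ∈ S, ∃ K : ℝ, ∀ P, IsPartition S A P → ∑ C ∈ P, |μ C| ≤ K := by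
  have key : ∀ P : Finset (Set Ω),
      ∑ C ∈ P, max (toE μ C) (-toE μ C) = ((∑ C ∈ P, |μ C| : ℝ) : EReal) := by
    intro P
    have hc : ((∑ C ∈ P, |μ C| : ℝ) : EReal) = ∑ C ∈ P, ((|μ C| : ℝ) : EReal) :=
      map_sum (⟨⟨Real.toEReal, EReal.coe_zero⟩, EReal.coe_add⟩ : ℝ →+ EReal) _ P
    rw [hc]
    refine Finset.sum_congr rfl fun C _ => ?_
    rw [abs, toE, ← EReal.coe_neg]
    exact (EReal.coe_strictMono.monotone.map_max).symm
  constructor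
  · intro h A hA
    refine ⟨(var S (toE μ) A).toReal, fun P hP => ?_⟩
    rw [← EReal.coe_le_coe_iff, ← key]
    refine le_trans ?_ (EReal.le_coe_toReal (h A hA))
    exact le_iSup₂_of_le (f := fun P (_ : IsPartition S A P) =>
      ∑ C ∈ P, max (toE μ C) (-toE μ C)) P hP le_rfl
  · intro h A hA
    obtain ⟨K, hK⟩ := h A hA
    refine ne_top_of_le_ne_top (EReal.coe_ne_top K) (iSup₂_le fun P hP => ?_)
    rw [key, EReal.coe_le_coe_iff]
    exact hK P hP

/-! ### Bounds for the envelope and its partition supremum -/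

section Envelope

variable {S : Set (Set Ω)} {G : Set (Set Ω → ℝ)}

lemma le_envelope {τ : Set Ω → ℝ} (hub : ∀ μ ∈ G, ∀ A ∈ S, μ A ≤ τ A)
    {μ : Set Ω → ℝ} (hμ : μ ∈ G) {A : Set Ω} (hA : A ∈ S) : μ A ≤ envelope G A := by
  refine le_csSup ⟨τ A, ?_⟩ ⟨μ, hμ, rfl⟩
  rintro _ ⟨ν, hν, rfl⟩
  exact hub ν hν A hA

lemma envelope_le (hne : G.Nonempty) {A : Set Ω} {a : ℝ} (h : ∀ μ ∈ G, μ A ≤ a) :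
    envelope G A ≤ a := by
  refine csSup_le (hne.image _) ?_
  rintro _ ⟨ν, hν, rfl⟩
  exact h ν hν

lemma envelope_empty (hne : G.Nonempty) (hG : ∀ μ ∈ G, IsRealCharge S μ) :
    envelope G ∅ = 0 := by
  have : (fun μ : Set Ω → ℝ => μ ∅) '' G = {0} := by
    rw [Set.image_congr (fun μ hμ => (hG μ hμ).empty)]
    exact hne.image_const 0
  rw [envelope, this, csSup_singleton]

/-- Subadditivity of the envelope along partitions. -/
lemma envelope_le_sum (hne : G.Nonempty) (hG : ∀ μ ∈ G, IsRealCharge S μ)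
    {τ : Set Ω → ℝ} (hub : ∀ μ ∈ G, ∀ A ∈ S, μ A ≤ τ A)
    {A : Set Ω} (hA : A ∈ S) {P : Finset (Set Ω)} (hP : IsPartition S A P) :
    envelope G A ≤ ∑ C ∈ P, envelope G C := by
  refine envelope_le hne fun μ hμ => ?_
  rw [(hG μ hμ).sum_partition hA hP]
  exact Finset.sum_le_sum fun C hC => le_envelope hub hμ (hP.1 hC)

lemma sum_envelope_le (hne : G.Nonempty) {τ : Set Ω → ℝ} (hτ : IsRealCharge S τ)
    (hub : ∀ μ ∈ G, ∀ A ∈ S, μ A ≤ τ A) {A : Set Ω} (hA : A ∈ S) {P : Finset (Set Ω)}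
    (hP : IsPartition S A P) : ∑ C ∈ P, envelope G C ≤ τ A := by
  rw [hτ.sum_partition hA hP]
  exact Finset.sum_le_sum fun C hC => envelope_le hne fun μ hμ => hub μ hμ C (hP.1 hC)

lemma sum_le_partSup (hne : G.Nonempty) {τ : Set Ω → ℝ} (hτ : IsRealCharge S τ)
    (hub : ∀ μ ∈ G, ∀ A ∈ S, μ A ≤ τ A) {A : Set Ω} (hA : A ∈ S) {P : Finset (Set Ω)}
    (hP : IsPartition S A P) : ∑ C ∈ P, envelope G C ≤ partSup S (envelope G) A := by
  refine le_csSup ⟨τ A, ?_⟩ ⟨P, hP, rfl⟩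
  rintro _ ⟨Q, hQ, rfl⟩
  exact sum_envelope_le hne hτ hub hA hQ

lemma partSup_le {f : Set Ω → ℝ} {A : Set Ω} (hA : A ∈ S) {a : ℝ}
    (h : ∀ P, IsPartition S A P → ∑ C ∈ P, f C ≤ a) : partSup S f A ≤ a := by
  refine csSup_le ⟨_, {A}, isPartition_singleton hA, rfl⟩ ?_
  rintro _ ⟨Q, hQ, rfl⟩
  exact h Q hQ

lemma exists_partition_lt {f : Set Ω → ℝ} {A : Set Ω} (hA : A ∈ S) {ε : ℝ} (hε : 0 < ε) :
    ∃ P, IsPartition S A P ∧ partSup S f A < ∑ C ∈ P, f C + ε := by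
  obtain ⟨_, ⟨P, hP, rfl⟩, h⟩ := exists_lt_of_lt_csSup
    (s := {x | ∃ P : Finset (Set Ω), IsPartition S A P ∧ ∑ C ∈ P, f C = x})
    ⟨_, {A}, isPartition_singleton hA, rfl⟩ (sub_lt_self (partSup S f A) hε)
  exact ⟨P, hP, by linarith⟩

/-! ### Additivity of the partition supremum -/

/-- Subadditivity of the partition supremum, by passing to traces on the pieces. -/
lemma partSup_le_sum (hS : IsSetSemiring S) (hne : G.Nonempty)
    (hG : ∀ μ ∈ G, IsRealCharge S μ) {τ : Set Ω → ℝ} (hτ : IsRealCharge S τ)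
    (hub : ∀ μ ∈ G, ∀ A ∈ S, μ A ≤ τ A) {n : ℕ} {A : Fin n → Set Ω} (hA : ∀ i, A i ∈ S)
    (hd : Pairwise (Function.onFun Disjoint A)) (hU : (⋃ i, A i) ∈ S) :
    partSup S (envelope G) (⋃ i, A i) ≤ ∑ i, partSup S (envelope G) (A i) := by
  have h0 := envelope_empty hne hG
  refine partSup_le hU fun P ⟨hPS, hPd, hPA⟩ => ?_
  -- refine `P` by its traces on the pieces `A i`
  calc ∑ C ∈ P, envelope G C ≤ ∑ C ∈ P, ∑ i, envelope G (C ∩ A i) := by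
        refine Finset.sum_le_sum fun C hC => ?_
        obtain ⟨Q, hQ, hsum⟩ := exists_isPartition_of_family (S := S) h0 Finset.univ
          (fun i => C ∩ A i) (fun i _ => hS.inter_mem _ (hPS hC) _ (hA i))
          (fun i _ j _ hij => (hd hij).mono inter_subset_right inter_subset_right)
        have hCU : (⋃ i ∈ (Finset.univ : Finset (Fin n)), C ∩ A i) = C := by
          simp only [Finset.mem_univ, iUnion_true]
          rw [← inter_iUnion, ← hPA]
          exact inter_eq_left.2 (subset_sUnion_of_mem hC)
        rw [hCU] at hQ
        exact (envelope_le_sum hne hG hub (hPS hC) hQ).trans hsum.le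
    _ = ∑ i, ∑ C ∈ P, envelope G (C ∩ A i) := Finset.sum_comm
    _ ≤ ∑ i, partSup S (envelope G) (A i) := by
        refine Finset.sum_le_sum fun i _ => ?_
        obtain ⟨Q, hQ, hsum⟩ := exists_isPartition_of_family (S := S) h0 P
          (fun C => C ∩ A i) (fun C hC => hS.inter_mem _ (hPS hC) _ (hA i))
          (fun C hC D hD hCD => (hPd hC hD hCD).mono inter_subset_left inter_subset_left)
        have hAU : (⋃ C ∈ P, C ∩ A i) = A i := by
          have : (⋃ C ∈ P, C ∩ A i) = (⋃₀ ↑P) ∩ A i := by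
            rw [sUnion_eq_biUnion, iUnion₂_inter]; simp
          rw [this, hPA]
          exact inter_eq_right.2 (subset_iUnion A i)
        rw [hAU] at hQ
        exact hsum.ge.trans (sum_le_partSup hne hτ hub (hA i) hQ)

/-- Superadditivity of the partition supremum, by gluing near-optimal partitions of the pieces. -/
lemma sum_partSup_le (hne : G.Nonempty)
    (hG : ∀ μ ∈ G, IsRealCharge S μ) {τ : Set Ω → ℝ} (hτ : IsRealCharge S τ)
    (hub : ∀ μ ∈ G, ∀ A ∈ S, μ A ≤ τ A) {n : ℕ} {A : Fin n → Set Ω} (hA : ∀ i, A i ∈ S)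
    (hd : Pairwise (Function.onFun Disjoint A)) (hU : (⋃ i, A i) ∈ S) :
    ∑ i, partSup S (envelope G) (A i) ≤ partSup S (envelope G) (⋃ i, A i) := by
  have h0 := envelope_empty hne hG
  refine le_of_forall_pos_le_add fun ε hε => ?_
  -- dividing by `n + 1` rather than `n` covers the empty family
  have hδ : 0 < ε / (n + 1) := by positivity
  choose P hP hlt using fun i =>
    exists_partition_lt (f := envelope G) (hA i) hδ
  have hsub : ∀ i, ∀ C ∈ P i, C ⊆ A i := fun i C hC => by
    rw [← (hP i).2.2]; exact subset_sUnion_of_mem hC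
  obtain ⟨Q, hQ, hsum⟩ := exists_isPartition_of_family (S := S) h0
    (Finset.univ.sigma P) (fun x => x.2)
    (fun x hx => (hP x.1).1 (Finset.mem_sigma.1 hx).2) (by
      rintro ⟨i, C⟩ hx ⟨j, D⟩ hy hne
      have hC : C ∈ P i := (Finset.mem_sigma.1 (Finset.mem_coe.1 hx)).2
      have hD : D ∈ P j := (Finset.mem_sigma.1 (Finset.mem_coe.1 hy)).2
      by_cases hij : i = j
      · subst hij
        exact (hP i).2.1 hC hD (fun h => hne (by rw [h]))
      · exact (hd hij).mono (hsub i C hC) (hsub j D hD))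
  have hQU : (⋃ x ∈ Finset.univ.sigma P, x.2) = ⋃ i, A i := by
    ext ω
    simp only [mem_iUnion, Finset.mem_sigma, Finset.mem_univ, true_and, exists_prop,
      Sigma.exists]
    refine exists_congr fun i => ?_
    rw [← (hP i).2.2]
    simp
  rw [hQU] at hQ
  rw [Finset.sum_sigma] at hsum
  have h1 := sum_le_partSup hne hτ hub hU hQ
  have h2 : ∑ i, partSup S (envelope G) (A i)
      ≤ ∑ i, (∑ C ∈ P i, envelope G C + ε / (n + 1)) :=
    Finset.sum_le_sum fun i _ => (hlt i).le
  rw [Finset.sum_add_distrib, Finset.sum_const, Finset.card_univ, Fintype.card_fin,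
    nsmul_eq_mul] at h2
  have h3 : (n : ℝ) * (ε / (n + 1)) ≤ ε := by
    rw [mul_div_assoc', div_le_iff₀ (by positivity)]
    nlinarith
  linarith

lemma isRealCharge_partSup (hS : IsSetSemiring S) (hne : G.Nonempty)
    (hG : ∀ μ ∈ G, IsRealCharge S μ) {τ : Set Ω → ℝ} (hτ : IsRealCharge S τ)
    (hub : ∀ μ ∈ G, ∀ A ∈ S, μ A ≤ τ A) : IsRealCharge S (partSup S (envelope G)) := by
  have hadd : ∀ (n : ℕ) (A : Fin n → Set Ω), (∀ i, A i ∈ S) →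
      Pairwise (Function.onFun Disjoint A) → (⋃ i, A i) ∈ S →
      partSup S (envelope G) (⋃ i, A i) = ∑ i, partSup S (envelope G) (A i) :=
    fun n A hA hd hU => le_antisymm (partSup_le_sum hS hne hG hτ hub hA hd hU)
      (sum_partSup_le hne hG hτ hub hA hd hU)
  refine ⟨?_, hadd⟩
  -- the value at `∅` is additivity for the empty family
  have h := hadd 0 (fun _ => ∅) (fun i => i.elim0) (fun i => i.elim0)
    (by simpa using hS.empty_mem)
  simpa using h

end Envelope

/-! ### Dedekind completeness -/

/-- Dedekind completeness of `fa(S)`: a nonempty family of finite-variation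
signed charges bounded above by a finite-variation signed charge has a least upper bound
(in the pointwise order) which is a finite-variation signed charge. -/
theorem statement7 {Ω : Type*} (S : Set (Set Ω)) (hS : MeasureTheory.IsSetSemiring S)
    (G : Set (Set Ω → ℝ)) (hne : G.Nonempty)
    (hG : ∀ μ ∈ G, IsRealCharge S μ ∧ FiniteVar S μ)
    (β : Set Ω → ℝ) (hβ : IsRealCharge S β ∧ FiniteVar S β)
    (hub : ∀ μ ∈ G, ∀ A ∈ S, μ A ≤ β A) :
    ∃ σ : Set Ω → ℝ, IsRealCharge S σ ∧ FiniteVar S σ ∧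
      (∀ μ ∈ G, ∀ A ∈ S, μ A ≤ σ A) ∧
      (∀ τ : Set Ω → ℝ, IsRealCharge S τ → FiniteVar S τ →
        (∀ μ ∈ G, ∀ A ∈ S, μ A ≤ τ A) → ∀ A ∈ S, σ A ≤ τ A) := by
  have hG' : ∀ μ ∈ G, IsRealCharge S μ := fun μ hμ => (hG μ hμ).1
  have hge : ∀ μ ∈ G, ∀ A ∈ S, μ A ≤ partSup S (envelope G) A := fun μ hμ A hA => by
    have h := sum_le_partSup hne hβ.1 hub hA (isPartition_singleton hA)
    rw [Finset.sum_singleton] at h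
    exact (le_envelope hub hμ hA).trans h
  have hleast : ∀ τ : Set Ω → ℝ, IsRealCharge S τ → (∀ μ ∈ G, ∀ A ∈ S, μ A ≤ τ A) →
      ∀ A ∈ S, partSup S (envelope G) A ≤ τ A := fun τ hτ hτub A hA =>
    partSup_le hA fun P hP => sum_envelope_le hne hτ hτub hA hP
  refine ⟨partSup S (envelope G), isRealCharge_partSup hS hne hG' hβ.1 hub, ?_, hge,
    fun τ hτ _ hτub => hleast τ hτ hτub⟩
  obtain ⟨μ₀, hμ₀⟩ := hne
  rw [finiteVar_iff]
  intro A hA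
  obtain ⟨K, hK⟩ := finiteVar_iff.1 (hG μ₀ hμ₀).2 A hA
  obtain ⟨L, hL⟩ := finiteVar_iff.1 hβ.2 A hA
  refine ⟨K + L, fun P hP => le_trans ?_ (add_le_add (hK P hP) (hL P hP))⟩
  rw [← Finset.sum_add_distrib]
  refine Finset.sum_le_sum fun C hC => ?_
  have h1 := hge μ₀ hμ₀ C (hP.1 hC)
  have h2 := hleast β hβ.1 hub C (hP.1 hC)
  rw [abs_le]
  constructor
  · linarith [neg_abs_le (μ₀ C), abs_nonneg (β C)]
  · linarith [le_abs_self (β C), abs_nonneg (μ₀ C)]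

end SignedCharges
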